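/- Let k ∈ {1,…,d−1} and let μ be a nonzero locally finite Borel measure on ℝ^d whose lower packing dimension is strictly larger than k. Then for every γ ∈ (0,1] there exists a constant c > 0 such that for μ-almost every x, limsup_{r→0} inf_{θ∈S^{d−1}, V∈G(d,d−k)} μ( X(x,r,V,γ) \ H(x,θ,γ) ) / μ(B(x,r)) > c, where the infimum is over all unit vectors θ and all (d−k)-dimensional linear subspaces V of ℝ^d. -/

import Mathlib

open MeasureTheory Filter Metric Set
open scoped NNReal ENNReal RealInnerProductSpace

/-- The upper local dimension of a measure at a point. -/
noncomputable def upperLocalDim {X : Type*} [MetricSpace X] [MeasurableSpace X]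
    (μ : Measure X) (x : X) : EReal :=
  Filter.limsup (fun r : ℝ =>
    ((Real.log (μ (Metric.ball x r)).toReal / Real.log r : ℝ) : EReal))
    (nhdsWithin 0 (Set.Ioi 0))

/-- The lower packing dimension of a measure: the `μ`-essential infimum of the upper
local dimensions. -/
noncomputable def lowerPackingDim {X : Type*} [MetricSpace X] [MeasurableSpace X]
    (μ : Measure X) : EReal :=
  essInf (upperLocalDim μ) μ

/-- The cone `X(x,r,V,γ) = {y ∈ B(x,r) : dist(y−x,V) < γ|y−x|}`. -/
def coneX {d : ℕ} (x : EuclideanSpace ℝ (Fin d)) (r : ℝ)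
    (V : Submodule ℝ (EuclideanSpace ℝ (Fin d))) (γ : ℝ) :
    Set (EuclideanSpace ℝ (Fin d)) :=
  {y ∈ Metric.ball x r | Metric.infDist (y - x) (V : Set (EuclideanSpace ℝ (Fin d))) < γ * ‖y - x‖}

/-- The almost half-space `H(x,θ,γ) = {y : (y−x)·θ > γ|y−x|}`. -/
def halfSpaceH {d : ℕ} (x θ : EuclideanSpace ℝ (Fin d)) (γ : ℝ) :
    Set (EuclideanSpace ℝ (Fin d)) :=
  {y | γ * ‖y - x‖ < ⟪y - x, θ⟫}

/-!
Suppose that on a set `A` the conical ratio stays below `c` at all small scales, and call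
`y ∈ A ∩ B(x, ρ)` heavy if `B(y, 5δρ)` carries more than the proportion `c` of the mass of
`B(x, 5ρ)`. The number of heavy points that are separated by a large multiple of `δρ` is at most a
constant times `δ⁻ᵏ`. Otherwise, choose for every heavy point a plane `V` and a direction `θ`
witnessing the small ratio at scale `4ρ`. Pigeonholing first the `k` coordinates orthogonal to the
planes, then the sets of directions in which the points see each other, yields heavy points
`a, b, z` such that `a - b` and `z - b` almost lie in the plane of `b` and almost point in opposite
directions. An almost half-space at `b` then misses one of the two heavy balls around `a` and `z`,
so the mass left in the cone at `b` is too large.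

Light points contribute little. Hence, for `s > k`, `t > 0` and suitably small `δ` and `c`, the sum
of `μ(B)ᵗ` over a cover of `A` by balls grows at most by the factor `δ⁻ˢ / 2` when the radius
shrinks from `ρ` to `δρ`. Iterating, Borel-Cantelli applies to the sets of `a ∈ A` with
`μ(B(a, 6δⁿρ)) ≤ δⁿᵘ`, where `u (1 - t) = s`, so the upper local dimension is at most `u` almost
everywhere on `A`. As `t` is arbitrarily small, `u` can be taken below the lower packing dimension,
which makes `A` null.
-/

section Covering

lemma packingNumber_le_of_forall_finset_card_le {X : Type*} [PseudoEMetricSpace X] {ε : ℝ≥0}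
    {A : Set X} {N : ℕ}
    (h : ∀ P : Finset X, (P : Set X) ⊆ A → IsSeparated ε (P : Set X) → P.card ≤ N) :
    packingNumber ε A ≤ N := by
  refine iSup₂_le fun C hCA => iSup_le fun hC => ?_
  by_contra! hN
  obtain ⟨P, hPC, hP⟩ := exists_subset_encard_eq (Order.add_one_le_of_lt hN)
  have hPfin : P.Finite := finite_of_encard_eq_coe (k := N + 1) (by exact_mod_cast hP)
  lift P to Finset X using hPfin
  have hcard : P.card = N + 1 := by exact_mod_cast (encard_coe_eq_coe_finsetCard P).symm.trans hP
  have := h P (hPC.trans hCA) (hC.subset hPC)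
  lia

lemma exists_finset_isCover_of_coveringNumber_le {X : Type*} [PseudoEMetricSpace X] {ε : ℝ≥0}
    {A : Set X} {N : ℕ} (h : coveringNumber ε A ≤ N) :
    ∃ F : Finset X, (F : Set X) ⊆ A ∧ IsCover ε A (F : Set X) ∧ F.card ≤ N := by
  obtain ⟨F, hFA, hF, hcover, hcard⟩ :=
    exists_set_encard_eq_coveringNumber (h.trans_lt (ENat.natCast_lt_top N)).ne
  lift F to Finset X using hF
  rw [encard_coe_eq_coe_finsetCard] at hcard
  exact ⟨F, hFA, hcover, by exact_mod_cast hcard.trans_le h⟩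

lemma coveringNumber_le_mul {X : Type*} [PseudoMetricSpace X] {ε ε' : ℝ≥0} {A : Set X} {M D : ℕ}
    (hM : coveringNumber ε' A ≤ M)
    (hD : ∀ x ∈ A, coveringNumber ε (A ∩ closedBall x ε') ≤ D) :
    coveringNumber ε A ≤ (M * D : ℕ) := by
  classical
  obtain ⟨G, hGA, hGcover, hGcard⟩ := exists_finset_isCover_of_coveringNumber_le hM
  choose! F hFA hFcover hFcard using fun x (hx : x ∈ A) =>
    exists_finset_isCover_of_coveringNumber_le (hD x hx)
  have hsub : (G.biUnion F : Set X) ⊆ A := by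
    simp only [Finset.coe_biUnion, iUnion_subset_iff]
    exact fun g hg => (hFA g (hGA hg)).trans inter_subset_left
  have hcover : IsCover ε A (G.biUnion F : Set X) := fun a ha => by
    obtain ⟨g, hg, hag⟩ := hGcover ha
    obtain ⟨y, hy, hay⟩ := hFcover g (hGA hg) ⟨ha, by simpa using hag⟩
    exact ⟨y, Finset.mem_coe.2 (Finset.mem_biUnion.2 ⟨g, hg, hy⟩), hay⟩
  have hcard : (G.biUnion F).card ≤ M * D :=
    (Finset.card_biUnion_le_card_mul _ _ D fun g hg => hFcard g (hGA hg)).trans (by gcongr)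
  calc coveringNumber ε A ≤ (G.biUnion F : Set X).encard := hcover.coveringNumber_le_encard hsub
    _ = (G.biUnion F).card := encard_coe_eq_coe_finsetCard _
    _ ≤ (M * D : ℕ) := by exact_mod_cast hcard

lemma exists_forall_coveringNumber_mul_le (E : Type*) [NormedAddCommGroup E] [NormedSpace ℝ E]
    [ProperSpace E] {ε : ℝ≥0} (hε : ε ≠ 0) :
    ∃ D : ℕ, ∀ (x : E) (r : ℝ≥0) (A : Set E), A ⊆ closedBall x r →
      coveringNumber (ε * r) A ≤ D := by
  obtain ⟨F, -, hF, hcover⟩ := exists_finite_isCover_of_isCompact (ε := ε / 2) (by positivity)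
    (isCompact_closedBall (0 : E) 1)
  lift F to Finset E using hF
  refine ⟨F.card, fun x r A hA => ?_⟩
  have hlip : LipschitzWith r fun z : E => x +ᵥ (r : ℝ) • z :=
    .of_dist_le_mul fun z w => by rw [dist_vadd_cancel_left, dist_smul₀, NNReal.norm_eq]
  have himage : (fun z : E => x +ᵥ (r : ℝ) • z) '' closedBall 0 1 = closedBall x r := by
    rw [← affinity_unitClosedBall r.coe_nonneg x, ← image_vadd, ← image_smul, image_image]
  have hball : IsCover (r * (ε / 2)) (closedBall x r) ((fun z : E => x +ᵥ (r : ℝ) • z) '' F) :=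
    himage ▸ hcover.image_lipschitz hlip
  calc coveringNumber (ε * r) A = coveringNumber (2 * (r * (ε / 2))) A := by
        congr 1; ring
    _ ≤ externalCoveringNumber (r * (ε / 2)) A :=
        coveringNumber_two_mul_le_externalCoveringNumber ..
    _ ≤ ((fun z : E => x +ᵥ (r : ℝ) • z) '' F).encard :=
        (hball.anti hA).externalCoveringNumber_le_encard
    _ ≤ F.card := (encard_image_le _ _).trans_eq (encard_coe_eq_coe_finsetCard F)

end Covering

section Geometry

lemma infDist_le_sum_abs_inner {E ι : Type*} [NormedAddCommGroup E] [InnerProductSpace ℝ E]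
    [Fintype ι] (V : Submodule ℝ E) [V.HasOrthogonalProjection] (b : OrthonormalBasis ι ℝ Vᗮ)
    (v : E) : infDist v (V : Set E) ≤ ∑ i, |⟪v, b i⟫| :=
  calc infDist v (V : Set E) ≤ ‖v - V.starProjection v‖ :=
        (infDist_le_dist_of_mem (V.starProjection_apply_mem v)).trans_eq (dist_eq_norm _ _)
    _ = ‖Vᗮ.orthogonalProjectionOnto v‖ := by
        rw [← Submodule.starProjection_orthogonal_val]; rfl
    _ = ‖∑ i, ⟪b i, Vᗮ.orthogonalProjectionOnto v⟫ • b i‖ := by rw [b.sum_repr']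
    _ ≤ ∑ i, ‖⟪b i, Vᗮ.orthogonalProjectionOnto v⟫ • b i‖ := norm_sum_le _ _
    _ = ∑ i, |⟪v, b i⟫| := Finset.sum_congr rfl fun i _ => by
        rw [norm_smul, b.orthonormal.1, mul_one, Real.norm_eq_abs,
          Submodule.inner_orthogonalProjectionOnto_eq_of_mem_left, real_inner_comm]

lemma card_Icc_floor_le {a b : ℝ} (hab : a ≤ b) :
    ((Finset.Icc ⌊a⌋ ⌊b⌋).card : ℝ) ≤ b - a + 2 := by
  have hcard : ((Finset.Icc ⌊a⌋ ⌊b⌋).card : ℤ) = ⌊b⌋ + 1 - ⌊a⌋ := by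
    rw [Int.card_Icc, Int.toNat_of_nonneg]
    have := Int.floor_le_floor hab
    lia
  have hcast : ((Finset.Icc ⌊a⌋ ⌊b⌋).card : ℝ) = ⌊b⌋ + 1 - ⌊a⌋ := by exact_mod_cast hcard
  linarith [Int.floor_le b, Int.lt_floor_add_one a]

lemma mul_card_Icc_floor_inv_le {δ : ℝ} (hδ : 0 < δ) (hδ1 : δ ≤ 1) :
    δ * (Finset.Icc ⌊-δ⁻¹⌋ ⌊δ⁻¹⌋).card ≤ 4 := by
  have hδinv : 0 < δ⁻¹ := inv_pos.2 hδ
  calc δ * (Finset.Icc ⌊-δ⁻¹⌋ ⌊δ⁻¹⌋).card ≤ δ * (δ⁻¹ - -δ⁻¹ + 2) := by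
        gcongr
        exact card_Icc_floor_le (by linarith)
    _ = 2 + 2 * δ := by field_simp; ring
    _ ≤ 4 := by linarith

lemma exists_finset_unit_net (E : Type*) [NormedAddCommGroup E] [ProperSpace E] {η : ℝ}
    (hη : 0 < η) :
    ∃ (t : Finset E) (c : E → E), (∀ u ∈ t, ‖u‖ = 1) ∧
      ∀ e, ‖e‖ = 1 → c e ∈ t ∧ ‖e - c e‖ ≤ η := by
  lift η to ℝ≥0 using hη.le
  obtain ⟨t, hts, htfin, hcover⟩ := exists_finite_isCover_of_isCompact (ε := η)
    (by exact_mod_cast hη.ne') (isCompact_sphere (0 : E) 1)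
  lift t to Finset E using htfin
  choose! c hct hc using fun e (he : e ∈ sphere (0 : E) 1) => hcover he
  refine ⟨t, c, fun u hu => mem_sphere_zero_iff_norm.1 (hts hu), fun e he => ?_⟩
  have hes : e ∈ sphere (0 : E) 1 := mem_sphere_zero_iff_norm.2 he
  exact ⟨hct e hes, (dist_eq_norm e (c e)).symm.trans_le (edist_le_coe.1 (hc e hes))⟩

variable {E : Type*} [NormedAddCommGroup E] [InnerProductSpace ℝ E]

lemma abs_inner_sub_le_of_floor_eq {x p q e u : E} {r η : ℝ} (hr : 0 < r)
    (hfloor : ⌊⟪p - x, u⟫ / r⌋ = ⌊⟪q - x, u⟫ / r⌋) (heu : ‖e - u‖ ≤ η) :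
    |⟪q - p, e⟫| ≤ r + η * ‖q - p‖ := by
  have hcell : |⟪q - p, u⟫| ≤ r := by
    have h := Int.abs_sub_lt_one_of_floor_eq_floor hfloor.symm
    rw [← sub_div, ← inner_sub_left, sub_sub_sub_cancel_right, abs_div, abs_of_pos hr,
      div_lt_one hr] at h
    exact h.le
  calc |⟪q - p, e⟫| = |⟪q - p, u⟫ + ⟪q - p, e - u⟫| := by rw [← inner_add_right, add_sub_cancel]
    _ ≤ |⟪q - p, u⟫| + |⟪q - p, e - u⟫| := abs_add_le _ _
    _ ≤ r + ‖q - p‖ * ‖e - u‖ := add_le_add hcell (abs_real_inner_le_norm _ _)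
    _ ≤ r + η * ‖q - p‖ := by rw [mul_comm η]; gcongr

lemma exists_forall_exists_abs_inner_sub_le (E ι : Type*) [NormedAddCommGroup E]
    [InnerProductSpace ℝ E] [ProperSpace E] [Fintype ι] {η : ℝ} (hη : 0 < η) :
    ∃ C : ℝ≥0, ∀ δ r : ℝ, 0 < δ → δ ≤ 1 → 0 < r →
      ∀ (x : E) (P : Finset E), (P : Set E) ⊆ closedBall x r →
      ∀ e : E → ι → E, (∀ y ∈ P, ∀ i, ‖e y i‖ = 1) →
      ∀ N : ℕ, C * N < δ ^ Fintype.card ι * P.card →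
      ∃ Q ⊆ P, N < Q.card ∧
        ∀ p ∈ Q, ∀ q ∈ Q, ∀ i, |⟪q - p, e p i⟫| ≤ δ * r + η * ‖q - p‖ := by
  classical
  obtain ⟨t, c, ht, hc⟩ := exists_finset_unit_net E hη
  refine ⟨(t.card * 4) ^ Fintype.card ι, fun δ r hδ hδ1 hr x P hPx e he N hN => ?_⟩
  let label (y : E) (i : ι) : E × ℤ := (c (e y i), ⌊⟪y - x, c (e y i)⟫ / (δ * r)⌋)
  let labels : Finset (ι → E × ℤ) :=
    Fintype.piFinset fun _ => t ×ˢ Finset.Icc ⌊-δ⁻¹⌋ ⌊δ⁻¹⌋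
  have hmaps : ∀ y ∈ P, label y ∈ labels := fun y hy => by
    refine Fintype.mem_piFinset.2 fun i => Finset.mem_product.2 ⟨(hc _ (he y hy i)).1, ?_⟩
    have hinner : |⟪y - x, c (e y i)⟫| ≤ r := by
      have h := abs_real_inner_le_norm (y - x) (c (e y i))
      rw [ht _ (hc _ (he y hy i)).1, mul_one] at h
      exact h.trans (mem_closedBall_iff_norm.1 (hPx hy))
    have hquot : |⟪y - x, c (e y i)⟫ / (δ * r)| ≤ δ⁻¹ := by
      rw [abs_div, abs_of_pos (mul_pos hδ hr), div_le_iff₀ (mul_pos hδ hr),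
        inv_mul_cancel_left₀ hδ.ne']
      exact hinner
    exact Finset.mem_Icc.2
      ⟨Int.floor_le_floor (abs_le.1 hquot).1, Int.floor_le_floor (abs_le.1 hquot).2⟩
  have hlabels : labels.card * N < P.card := by
    rw [← Nat.cast_lt (α := ℝ)]
    refine lt_of_mul_lt_mul_left (hN.trans_le' ?_) (pow_nonneg hδ.le (Fintype.card ι))
    rw [Fintype.card_piFinset, Finset.prod_const, Finset.card_univ, Finset.card_product]
    push_cast
    rw [← mul_assoc, ← mul_pow, mul_left_comm]
    gcongr
    exact mul_card_Icc_floor_inv_le hδ hδ1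
  obtain ⟨l, -, hl⟩ := Finset.exists_lt_card_fiber_of_mul_lt_card_of_maps_to hmaps hlabels
  refine ⟨P.filter (label · = l), Finset.filter_subset _ _, hl, fun p hp q hq i => ?_⟩
  obtain ⟨hpP, hpl⟩ := Finset.mem_filter.1 hp
  have hpq : label p i = label q i := by rw [hpl, (Finset.mem_filter.1 hq).2]
  obtain ⟨hdir, hfloor⟩ := Prod.mk.inj hpq
  exact abs_inner_sub_le_of_floor_eq (mul_pos hδ hr) (hdir.symm ▸ hfloor) (hc _ (he p hpP i)).2

lemma exists_forall_exists_infDist_sub_le (E : Type*) [NormedAddCommGroup E]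
    [InnerProductSpace ℝ E] [FiniteDimensional ℝ E] (k : ℕ) {η : ℝ} (hη : 0 < η) :
    ∃ C : ℝ≥0, ∀ δ r : ℝ, 0 < δ → δ ≤ 1 → 0 < r →
      ∀ (x : E) (P : Finset E), (P : Set E) ⊆ closedBall x r →
      ∀ V : E → Submodule ℝ E, (∀ y ∈ P, Module.finrank ℝ (V y)ᗮ = k) →
      ∀ N : ℕ, C * N < δ ^ k * P.card →
      ∃ Q ⊆ P, N < Q.card ∧
        ∀ p ∈ Q, ∀ q ∈ Q, infDist (q - p) (V p : Set E) ≤ k * (δ * r + η * ‖q - p‖) := by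
  have : ProperSpace E := FiniteDimensional.proper ℝ E
  obtain ⟨C, hC⟩ := exists_forall_exists_abs_inner_sub_le E (Fin k) hη
  refine ⟨C, fun δ r hδ hδ1 hr x P hPx V hV N hN => ?_⟩
  have hframe : ∀ y ∈ P, ∃ e : Fin k → E, (∀ i, ‖e i‖ = 1) ∧
      ∀ v, infDist v (V y : Set E) ≤ ∑ i, |⟪v, e i⟫| := fun y hy =>
    let b := (stdOrthonormalBasis ℝ (V y)ᗮ).reindex (finCongr (hV y hy))
    ⟨fun i => b i, fun i => b.orthonormal.1 i, infDist_le_sum_abs_inner (V y) b⟩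
  choose! e he hdist using hframe
  obtain ⟨Q, hQP, hNQ, hQ⟩ := hC δ r hδ hδ1 hr x P hPx e he N (by rwa [Fintype.card_fin])
  refine ⟨Q, hQP, hNQ, fun p hp q hq => (hdist p (hQP hp) _).trans ?_⟩
  simpa only [Finset.card_univ, Fintype.card_fin, nsmul_eq_mul] using
    Finset.sum_le_card_nsmul Finset.univ _ _ fun i _ => hQ p hp q hq i

open NormedSpace in
lemma inner_le_of_norm_normalize_sub_le {v u θ : E} {η : ℝ} (hvu : ‖normalize v - u‖ ≤ η)
    (hθ : ‖θ‖ = 1) (hu : ⟪u, θ⟫ ≤ 0) : ⟪v, θ⟫ ≤ η * ‖v‖ := by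
  have hv : ⟪normalize v, θ⟫ ≤ η := by
    calc ⟪normalize v, θ⟫ = ⟪normalize v - u, θ⟫ + ⟪u, θ⟫ := by rw [inner_sub_left]; ring
      _ ≤ ‖normalize v - u‖ * ‖θ‖ + 0 := add_le_add (real_inner_le_norm _ _) hu
      _ ≤ η := by simpa [hθ] using hvu
  calc ⟪v, θ⟫ = ‖v‖ * ⟪normalize v, θ⟫ := by rw [← real_inner_smul_left, norm_smul_normalize]
    _ ≤ η * ‖v‖ := by rw [mul_comm]; gcongr

open NormedSpace in
lemma exists_forall_exists_inner_sub_le (E : Type*) [NormedAddCommGroup E]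
    [InnerProductSpace ℝ E] [ProperSpace E] {η : ℝ} (hη : 0 < η) :
    ∃ N : ℕ, ∀ Q : Finset E, N < Q.card → ∃ b ∈ Q, ∃ a ∈ Q, ∃ z ∈ Q, a ≠ b ∧ z ≠ b ∧
      ∀ θ : E, ‖θ‖ = 1 → ⟪a - b, θ⟫ ≤ η * ‖a - b‖ ∨ ⟪z - b, θ⟫ ≤ η * ‖z - b‖ := by
  classical
  obtain ⟨t, c, -, hc⟩ := exists_finset_unit_net E hη
  refine ⟨t.powerset.card, fun Q hQ => ?_⟩
  let directions (p : E) : Finset E := (Q.erase p).image fun q => c (normalize (q - p))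
  have hnet {p q : E} (hqp : q ≠ p) : c (normalize (q - p)) ∈ t ∧
      ‖normalize (q - p) - c (normalize (q - p))‖ ≤ η :=
    hc _ (norm_normalize (sub_ne_zero.2 hqp))
  have hmaps : ∀ p ∈ Q, directions p ∈ t.powerset := fun p _ => by
    refine Finset.mem_powerset.2 (Finset.image_subset_iff.2 fun q hq => ?_)
    exact (hnet (Finset.ne_of_mem_erase hq)).1
  obtain ⟨a, ha, b, hb, hab, hdirections⟩ := Finset.exists_ne_map_eq_of_card_lt_of_maps_to hQ hmaps
  -- As seen from `b`, the point `z` lies in the direction in which `a` sees `b`.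
  obtain ⟨z, hz, hzb⟩ : ∃ z ∈ Q.erase b, c (normalize (z - b)) = c (normalize (b - a)) := by
    have h : c (normalize (b - a)) ∈ directions a :=
      Finset.mem_image_of_mem _ (Finset.mem_erase.2 ⟨hab.symm, hb⟩)
    rw [hdirections] at h
    exact Finset.mem_image.1 h
  refine ⟨b, hb, a, ha, z, Finset.mem_of_mem_erase hz, hab, Finset.ne_of_mem_erase hz,
    fun θ hθ => ?_⟩
  rcases le_total 0 ⟪c (normalize (b - a)), θ⟫ with h | h
  · left
    refine inner_le_of_norm_normalize_sub_le (u := -c (normalize (b - a))) ?_ hθ (by simpa using h)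
    rw [← neg_sub b a, normalize_neg, neg_sub_neg, norm_sub_rev]
    exact (hnet hab.symm).2
  · right
    exact inner_le_of_norm_normalize_sub_le (hzb ▸ (hnet (Finset.ne_of_mem_erase hz)).2) hθ h

end Geometry

section ConeGeometry

variable {d : ℕ} {p q θ : EuclideanSpace ℝ (Fin d)} {V : Submodule ℝ (EuclideanSpace ℝ (Fin d))}
  {γ ρ s : ℝ}

lemma sub_lt_norm_sub_of_mem_ball {w : EuclideanSpace ℝ (Fin d)} (hw : w ∈ ball q ρ) :
    ‖q - p‖ - ρ < ‖w - p‖ := by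
  have hnorm := norm_sub_norm_le (q - p) (w - p)
  rw [sub_sub_sub_cancel_right, norm_sub_rev q w] at hnorm
  linarith [mem_ball_iff_norm.1 hw]

lemma ball_subset_coneX (hγ : 0 < γ)
    (hV : infDist (q - p) (V : Set (EuclideanSpace ℝ (Fin d))) ≤ γ / 2 * ‖q - p‖)
    (hρ : (1 + γ) * ρ ≤ γ / 2 * ‖q - p‖) (hs : ‖q - p‖ + ρ ≤ s) :
    ball q ρ ⊆ coneX p s V γ := fun w hw => by
  have hwq : ‖w - q‖ < ρ := mem_ball_iff_norm.1 hw
  refine ⟨?_, ?_⟩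
  · rw [mem_ball_iff_norm, ← sub_add_sub_cancel w q p]
    exact (norm_add_le _ _).trans_lt (by linarith)
  · have hdist : infDist (w - p) (V : Set (EuclideanSpace ℝ (Fin d))) ≤
        infDist (q - p) (V : Set (EuclideanSpace ℝ (Fin d))) + dist (w - p) (q - p) :=
      infDist_le_infDist_add_dist
    rw [dist_sub_right, dist_eq_norm] at hdist
    have hwp := mul_lt_mul_of_pos_left (sub_lt_norm_sub_of_mem_ball (p := p) hw) hγ
    linarith

lemma disjoint_ball_halfSpaceH (hγ : 0 < γ) (hθ : ‖θ‖ = 1)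
    (hinner : ⟪q - p, θ⟫ ≤ γ / 2 * ‖q - p‖) (hρ : (1 + γ) * ρ ≤ γ / 2 * ‖q - p‖) :
    Disjoint (ball q ρ) (halfSpaceH p θ γ) := by
  refine disjoint_left.2 fun w hw hwH => ?_
  have hwq : ⟪w - q, θ⟫ < ρ := (real_inner_le_norm _ _).trans_lt (by
    rw [hθ, mul_one]; exact mem_ball_iff_norm.1 hw)
  have hwp := mul_lt_mul_of_pos_left (sub_lt_norm_sub_of_mem_ball (p := p) hw) hγ
  have hH : γ * ‖w - p‖ < ⟪w - q, θ⟫ + ⟪q - p, θ⟫ := by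
    rw [← inner_add_left, sub_add_sub_cancel]; exact hwH
  linarith

lemma ball_subset_coneX_diff_halfSpaceH {k : ℕ} (hγ : 0 < γ) (hρ0 : 0 ≤ ρ)
    (hV : infDist (q - p) (V : Set (EuclideanSpace ℝ (Fin d))) ≤
      k * (ρ + γ / (4 * (k + 1)) * ‖q - p‖))
    (hθ : ‖θ‖ = 1) (hinner : ⟪q - p, θ⟫ ≤ γ / (4 * (k + 1)) * ‖q - p‖)
    (hρ : (4 * k + 10 * (1 + γ)) * ρ ≤ γ * ‖q - p‖) (hs : ‖q - p‖ + 5 * ρ ≤ s) :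
    ball q (5 * ρ) ⊆ coneX p s V γ \ halfSpaceH p θ γ := by
  have hball : (1 + γ) * (5 * ρ) ≤ γ / 2 * ‖q - p‖ := by
    have : 0 ≤ 4 * k * ρ := by positivity
    linarith
  have hplane : k * (ρ + γ / (4 * (k + 1)) * ‖q - p‖) ≤ γ / 2 * ‖q - p‖ := by
    have hk : k * (γ / (4 * (k + 1))) ≤ γ / 4 := by
      rw [mul_div_assoc', div_le_div_iff₀ (by positivity) (by positivity)]
      linarith
    have := mul_le_mul_of_nonneg_right hk (norm_nonneg (q - p))
    have : 0 ≤ (1 + γ) * ρ := by positivity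
    linarith
  have hside : γ / (4 * (k + 1)) * ‖q - p‖ ≤ γ / 2 * ‖q - p‖ := by
    gcongr
    linarith [Nat.cast_nonneg (α := ℝ) k]
  exact subset_sdiff.2 ⟨ball_subset_coneX hγ (hV.trans hplane) hball hs,
    disjoint_ball_halfSpaceH hγ hθ (hinner.trans hside) hball⟩

lemma finrank_orthogonal_of_finrank_eq_sub {k : ℕ} (hkd : k ≤ d)
    (hV : Module.finrank ℝ V = d - k) : Module.finrank ℝ Vᗮ = k := by
  have h := V.finrank_add_finrank_orthogonal
  rw [hV, finrank_euclideanSpace_fin] at h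
  exact Nat.add_left_cancel (h.trans (Nat.sub_add_cancel hkd).symm)

lemma exists_forall_exists_ball_subset_coneX_diff_halfSpaceH {k : ℕ} (hkd : k ≤ d)
    (hγ : 0 < γ) :
    ∃ L C : ℝ≥0, L ≠ 0 ∧ ∀ δ r : ℝ≥0, 0 < δ → δ ≤ 2 / 5 → 0 < r →
      ∀ (x : EuclideanSpace ℝ (Fin d)) (P : Finset (EuclideanSpace ℝ (Fin d))),
      (P : Set (EuclideanSpace ℝ (Fin d))) ⊆ closedBall x r →
      IsSeparated (L * (δ * r) : ℝ≥0) (P : Set (EuclideanSpace ℝ (Fin d))) →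
      ∀ V : EuclideanSpace ℝ (Fin d) → Submodule ℝ (EuclideanSpace ℝ (Fin d)),
      (∀ y ∈ P, Module.finrank ℝ (V y) = d - k) → C < δ ^ k * P.card →
      ∃ y₀ ∈ P, ∀ θ, ‖θ‖ = 1 → ∃ y ∈ P,
        ball y (5 * (δ * r)) ⊆ coneX y₀ (4 * r) (V y₀) γ \ halfSpaceH y₀ θ γ := by
  have hη : 0 < γ / (4 * (k + 1)) := by positivity
  obtain ⟨C, hC⟩ := exists_forall_exists_infDist_sub_le (EuclideanSpace ℝ (Fin d)) k hη
  obtain ⟨N, hN⟩ := exists_forall_exists_inner_sub_le (EuclideanSpace ℝ (Fin d)) hη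
  obtain ⟨L, hL0, hL⟩ : ∃ L : ℝ≥0, L ≠ 0 ∧ γ * L = 4 * k + 10 * (1 + γ) := by
    have hL : 0 < (4 * k + 10 * (1 + γ)) / γ := by positivity
    exact ⟨Real.toNNReal _, (Real.toNNReal_pos.2 hL).ne', by
      rw [Real.coe_toNNReal _ hL.le, mul_div_cancel₀ _ hγ.ne']⟩
  refine ⟨L, C * N, hL0, fun δ r hδ hδ1 hr x P hPx hsep V hV hcard => ?_⟩
  have hδ1' : (δ : ℝ) ≤ 2 / 5 := by exact_mod_cast hδ1
  obtain ⟨Q, hQP, hNQ, hQ⟩ := hC δ r hδ (by linarith) hr x P hPx V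
    (fun y hy => finrank_orthogonal_of_finrank_eq_sub hkd (hV y hy)) N (by exact_mod_cast hcard)
  have hclose : ∀ p ∈ Q, ∀ q ∈ Q, ‖q - p‖ + 5 * (δ * r) ≤ 4 * r := fun p hp q hq => by
    have hδr : (δ * r : ℝ) ≤ 2 / 5 * r := by gcongr
    have htriangle := dist_triangle_right q p x
    rw [dist_eq_norm] at htriangle
    linarith [mem_closedBall.1 (hPx (hQP hp)), mem_closedBall.1 (hPx (hQP hq))]
  have hfar : ∀ p ∈ Q, ∀ q ∈ Q, q ≠ p → (4 * k + 10 * (1 + γ)) * (δ * r) ≤ γ * ‖q - p‖ :=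
    fun p hp q hq hqp => by
      have h : L * (δ * r) < nndist q p := ENNReal.coe_lt_coe.1 <| by
        simpa only [edist_nndist] using hsep (hQP hq) (hQP hp) hqp
      rw [← hL, mul_assoc, ← dist_eq_norm]
      gcongr
      exact_mod_cast h.le
  obtain ⟨b, hb, a, ha, z, hz, hab, hzb, hor⟩ := hN Q hNQ
  have hball : ∀ q ∈ Q, q ≠ b → ∀ θ, ‖θ‖ = 1 → ⟪q - b, θ⟫ ≤ γ / (4 * (k + 1)) * ‖q - b‖ →
      ball q (5 * (δ * r)) ⊆ coneX b (4 * r) (V b) γ \ halfSpaceH b θ γ :=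
    fun q hq hqb θ hθ h => ball_subset_coneX_diff_halfSpaceH hγ (by positivity)
      (hQ b hb q hq) hθ h (hfar b hb q hq hqb) (hclose b hb q hq)
  exact ⟨b, hQP hb, fun θ hθ => (hor θ hθ).elim
    (fun h => ⟨a, hQP ha, hball a ha hab θ hθ h⟩) fun h => ⟨z, hQP hz, hball z hz hzb θ hθ h⟩⟩

end ConeGeometry

section DecayingCovers

variable {X : Type*} [PseudoMetricSpace X] [MeasurableSpace X] {μ : Measure X} {A : Set X}
  {t : ℝ} {δ δ' R : ℝ≥0} {q q' : ℝ≥0∞}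

/-- At every scale `ρ ≤ R`, the part of `A` in a ball of radius `ρ` can be covered by balls of
radius `δρ` in such a way that passing to the covering balls multiplies the sum of the `t`-th powers
of masses by at most `q`. Masses are taken on five times larger balls. -/
def HasDecayingCovers (μ : Measure X) (A : Set X) (t : ℝ) (δ : ℝ≥0) (q : ℝ≥0∞) (R : ℝ≥0) : Prop :=
  ∀ (x : X) (ρ : ℝ≥0), 0 < ρ → ρ ≤ R → ∃ F : Finset X,
    IsCover (δ * ρ) (A ∩ closedBall x ρ) (F : Set X) ∧
      ∑ y ∈ F, μ (ball y (5 * (δ * ρ))) ^ t ≤ q * μ (ball x (5 * ρ)) ^ t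

lemma sum_biUnion_le_sum_sum {ι α M : Type*} [DecidableEq α] [AddCommMonoid M] [PartialOrder M]
    [IsOrderedAddMonoid M] [CanonicallyOrderedAdd M] (s : Finset ι) (u : ι → Finset α)
    (f : α → M) : ∑ a ∈ s.biUnion u, f a ≤ ∑ i ∈ s, ∑ a ∈ u i, f a := by
  classical
  induction s using Finset.induction_on with
  | empty => simp
  | insert i s hi ih =>
    rw [Finset.biUnion_insert, Finset.sum_insert hi]
    calc ∑ a ∈ u i ∪ s.biUnion u, f a
        ≤ ∑ a ∈ u i, f a + ∑ a ∈ s.biUnion u, f a :=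
          le_self_add.trans_eq (Finset.sum_union_inter (f := f))
      _ ≤ ∑ a ∈ u i, f a + ∑ j ∈ s, ∑ a ∈ u j, f a := by gcongr

lemma HasDecayingCovers.mul (h : HasDecayingCovers μ A t δ q R)
    (h' : HasDecayingCovers μ A t δ' q' R) (hδ : 0 < δ) (hδ1 : δ ≤ 1) :
    HasDecayingCovers μ A t (δ' * δ) (q' * q) R := fun x ρ hρ hρR => by
  classical
  obtain ⟨F, hF, hFsum⟩ := h x ρ hρ hρR
  choose G hG hGsum using fun y =>
    h' y (δ * ρ) (by positivity) ((mul_le_of_le_one_left' hδ1).trans hρR)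
  refine ⟨F.biUnion G, fun a ha => ?_, ?_⟩
  · obtain ⟨y, hy, hay⟩ := hF ha
    obtain ⟨z, hz, haz⟩ := hG y ⟨ha.1, edist_le_coe.1 hay⟩
    exact ⟨z, Finset.mem_biUnion.2 ⟨y, hy, hz⟩, by rwa [mul_assoc]⟩
  · push_cast at hGsum ⊢
    calc ∑ z ∈ F.biUnion G, μ (ball z (5 * (δ' * δ * ρ))) ^ t
        ≤ ∑ y ∈ F, ∑ z ∈ G y, μ (ball z (5 * (δ' * (δ * ρ)))) ^ t := by
          simpa only [mul_assoc] using sum_biUnion_le_sum_sum F G _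
      _ ≤ ∑ y ∈ F, q' * μ (ball y (5 * (δ * ρ))) ^ t := Finset.sum_le_sum fun y _ => hGsum y
      _ = q' * ∑ y ∈ F, μ (ball y (5 * (δ * ρ))) ^ t := (Finset.mul_sum ..).symm
      _ ≤ q' * (q * μ (ball x (5 * ρ)) ^ t) := by gcongr
      _ = q' * q * μ (ball x (5 * ρ)) ^ t := (mul_assoc ..).symm

lemma HasDecayingCovers.pow (h : HasDecayingCovers μ A t δ q R) (hδ : 0 < δ) (hδ1 : δ ≤ 1)
    (n : ℕ) : HasDecayingCovers μ A t (δ ^ n) (q ^ n) R := by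
  induction n with
  | zero =>
    refine fun x ρ _ _ => ⟨{x}, fun a ha => ⟨x, by simp, ?_⟩, by simp⟩
    simpa using edist_le_coe.2 ha.2
  | succ n ih => simpa only [pow_succ] using h.mul ih hδ hδ1

lemma HasDecayingCovers.measure_light_le (h : HasDecayingCovers μ A t δ q R) (hδ : 0 < δ)
    (ht : 0 ≤ t) (ht1 : t ≤ 1) {x : X} {ρ : ℝ≥0} (hρ : 0 < ρ) (hρR : ρ ≤ R) (T : ℝ≥0∞) :
    μ {a ∈ A ∩ closedBall x ρ | μ (ball a (6 * (δ * ρ))) ≤ T} ≤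
      T ^ (1 - t) * (q * μ (ball x (5 * ρ)) ^ t) := by
  classical
  obtain ⟨F, hF, hFsum⟩ := h x ρ hρ hρR
  let light : Finset X := F.filter fun y => μ (ball y (5 * (δ * ρ))) ≤ T
  have hsub : {a ∈ A ∩ closedBall x ρ | μ (ball a (6 * (δ * ρ))) ≤ T} ⊆
      ⋃ y ∈ light, ball y (5 * (δ * ρ)) := by
    rintro a ⟨ha, haT⟩
    obtain ⟨y, hy, hay⟩ := hF ha
    have hδρ : (0 : ℝ) < δ * ρ := by positivity
    have hdist : dist a y ≤ δ * ρ := edist_le_coe.1 hay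
    have hball : ball y (5 * (δ * ρ)) ⊆ ball a (6 * (δ * ρ)) :=
      ball_subset_ball' (by rw [dist_comm]; linarith)
    exact mem_iUnion₂.2 ⟨y, Finset.mem_filter.2 ⟨hy, (measure_mono hball).trans haT⟩,
      mem_ball.2 (by linarith)⟩
  have hpow : ∀ y ∈ light, μ (ball y (5 * (δ * ρ))) ≤
      T ^ (1 - t) * μ (ball y (5 * (δ * ρ))) ^ t := fun y hy => by
    calc μ (ball y (5 * (δ * ρ)))
        = μ (ball y (5 * (δ * ρ))) ^ (1 - t) * μ (ball y (5 * (δ * ρ))) ^ t := by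
          rw [← ENNReal.rpow_add_of_nonneg _ _ (sub_nonneg.2 ht1) ht, sub_add_cancel,
            ENNReal.rpow_one]
      _ ≤ T ^ (1 - t) * μ (ball y (5 * (δ * ρ))) ^ t := by
          gcongr
          exact (Finset.mem_filter.1 hy).2
  calc μ {a ∈ A ∩ closedBall x ρ | μ (ball a (6 * (δ * ρ))) ≤ T}
      ≤ ∑ y ∈ light, μ (ball y (5 * (δ * ρ))) :=
        (measure_mono hsub).trans (measure_biUnion_finset_le _ _)
    _ ≤ ∑ y ∈ light, T ^ (1 - t) * μ (ball y (5 * (δ * ρ))) ^ t := Finset.sum_le_sum hpow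
    _ ≤ ∑ y ∈ F, T ^ (1 - t) * μ (ball y (5 * (δ * ρ))) ^ t :=
        Finset.sum_le_sum_of_subset (Finset.filter_subset _ _)
    _ = T ^ (1 - t) * ∑ y ∈ F, μ (ball y (5 * (δ * ρ))) ^ t := (Finset.mul_sum ..).symm
    _ ≤ T ^ (1 - t) * (q * μ (ball x (5 * ρ)) ^ t) := by gcongr

/-- The points of `A` in the closed ball of radius `ρ` around `x` whose neighbourhoods at scale `δρ`
carry a proportion of more than `c` of the mass near `x`. -/
def heavyPoints (μ : Measure X) (A : Set X) (c : ℝ≥0∞) (δ : ℝ≥0) (x : X) (ρ : ℝ≥0) : Set X :=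
  {y ∈ A ∩ closedBall x ρ | c * μ (ball x (5 * ρ)) < μ (ball y (5 * (δ * ρ)))}

lemma hasDecayingCovers_of_coveringNumber_heavyPoints_le {c : ℝ≥0∞} {N D : ℕ} (ht : 0 ≤ t)
    (hδ : δ ≤ 2 / 5) (hq : N + D * c ^ t ≤ q)
    (hN : ∀ x ρ, 0 < ρ → ρ ≤ R → coveringNumber (δ * ρ) (heavyPoints μ A c δ x ρ) ≤ N)
    (hD : ∀ (x : X) (ρ : ℝ≥0) (B : Set X), B ⊆ closedBall x ρ → coveringNumber (δ * ρ) B ≤ D) :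
    HasDecayingCovers μ A t δ q R := fun x ρ hρ hρR => by
  classical
  obtain ⟨H, hHsub, hH, hHcard⟩ :=
    exists_finset_isCover_of_coveringNumber_le (hN x ρ hρ hρR)
  obtain ⟨G, hGsub, hG, hGcard⟩ := exists_finset_isCover_of_coveringNumber_le
    (hD x ρ ((A ∩ closedBall x ρ) \ heavyPoints μ A c δ x ρ)
      (sdiff_subset.trans inter_subset_right))
  have hheavy : ∀ y ∈ H, μ (ball y (5 * (δ * ρ))) ^ t ≤ μ (ball x (5 * ρ)) ^ t := fun y hy => by
    have hδρ : (δ * ρ : ℝ) ≤ 2 / 5 * ρ := by gcongr; exact_mod_cast hδ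
    have hyx : dist y x ≤ ρ := (hHsub hy).1.2
    gcongr
    exact ball_subset_ball' (by linarith [ρ.coe_nonneg])
  have hlight : ∀ y ∈ G, μ (ball y (5 * (δ * ρ))) ^ t ≤ c ^ t * μ (ball x (5 * ρ)) ^ t :=
    fun y hy => by
      rw [← ENNReal.mul_rpow_of_nonneg _ _ ht]
      gcongr
      exact not_lt.1 fun hlt => (hGsub hy).2 ⟨(hGsub hy).1, hlt⟩
  refine ⟨H ∪ G, fun a ha => ?_, ?_⟩
  · by_cases hah : a ∈ heavyPoints μ A c δ x ρ
    · obtain ⟨y, hy, hay⟩ := hH hah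
      exact ⟨y, Finset.mem_union_left _ hy, hay⟩
    · obtain ⟨y, hy, hay⟩ := hG ⟨ha, hah⟩
      exact ⟨y, Finset.mem_union_right _ hy, hay⟩
  · calc ∑ y ∈ H ∪ G, μ (ball y (5 * (δ * ρ))) ^ t
        ≤ ∑ y ∈ H, μ (ball y (5 * (δ * ρ))) ^ t + ∑ y ∈ G, μ (ball y (5 * (δ * ρ))) ^ t :=
          le_self_add.trans_eq (Finset.sum_union_inter (f := fun y => μ (ball y _) ^ t))
      _ ≤ H.card * μ (ball x (5 * ρ)) ^ t + G.card * (c ^ t * μ (ball x (5 * ρ)) ^ t) := by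
          simpa only [nsmul_eq_mul] using add_le_add (Finset.sum_le_card_nsmul _ _ _ hheavy)
            (Finset.sum_le_card_nsmul _ _ _ hlight)
      _ ≤ N * μ (ball x (5 * ρ)) ^ t + D * (c ^ t * μ (ball x (5 * ρ)) ^ t) := by gcongr
      _ = (N + D * c ^ t) * μ (ball x (5 * ρ)) ^ t := by ring
      _ ≤ q * μ (ball x (5 * ρ)) ^ t := by gcongr

end DecayingCovers

section LocalDimension

open scoped Topology

variable {X : Type*} [MetricSpace X] [MeasurableSpace X] {μ : Measure X} {x : X} {s : ℝ}

lemma upperLocalDim_le_of_eventually_le {c : ℝ} (hc : 0 < c)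
    (h : ∀ᶠ r in 𝓝[>] (0 : ℝ), c * r ^ s ≤ μ.real (ball x r)) : upperLocalDim μ x ≤ s := by
  have hle : ∀ᶠ r in 𝓝[>] (0 : ℝ),
      ((Real.log (μ.real (ball x r)) / Real.log r : ℝ) : EReal) ≤
        ((s + Real.log c / Real.log r : ℝ) : EReal) := by
    filter_upwards [h, Ioo_mem_nhdsGT one_pos] with r hr ⟨hr0, hr1⟩
    have hlog : Real.log r < 0 := Real.log_neg hr0 hr1
    rw [EReal.coe_le_coe_iff, div_le_iff_of_neg hlog, add_mul, div_mul_cancel₀ _ hlog.ne]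
    calc s * Real.log r + Real.log c = Real.log (c * r ^ s) := by
          rw [Real.log_mul hc.ne' (Real.rpow_pos_of_pos hr0 s).ne', Real.log_rpow hr0, add_comm]
      _ ≤ Real.log (μ.real (ball x r)) := Real.log_le_log (by positivity) hr
  have hlim : Tendsto (fun r => s + Real.log c / Real.log r) (𝓝[>] 0) (𝓝 s) := by
    simpa using (Real.tendsto_log_nhdsGT_zero.const_div_atBot (Real.log c)).const_add s
  calc upperLocalDim μ x ≤ limsup (fun r => ((s + Real.log c / Real.log r : ℝ) : EReal)) (𝓝[>] 0) :=
        limsup_le_limsup hle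
    _ = s := ((continuous_coe_real_ereal.tendsto s).comp hlim).limsup_eq

lemma upperLocalDim_le_of_eventually_pow_le [IsLocallyFiniteMeasure μ] {δ C : ℝ≥0} (hδ : 0 < δ)
    (hδ1 : δ < 1) (hC : 0 < C) (hs : 0 ≤ s)
    (h : ∀ᶠ n : ℕ in atTop, ((δ : ℝ≥0∞) ^ n) ^ s ≤ μ (ball x (C * δ ^ n))) :
    upperLocalDim μ x ≤ s := by
  have hC' : (0 : ℝ) < C := hC
  have hδ' : (0 : ℝ) < δ := hδ
  obtain ⟨n₀, hn₀⟩ := eventually_atTop.1 h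
  obtain ⟨ε, hε, hfin⟩ := (μ.finiteAt_nhds x).exists_mem_basis nhds_basis_ball
  have hr₀ : (0 : ℝ) < min ε (C * δ ^ n₀) := lt_min hε (by positivity)
  refine upperLocalDim_le_of_eventually_le (c := (δ / C) ^ s) (by positivity) ?_
  filter_upwards [Ioo_mem_nhdsGT hr₀, Ioo_mem_nhdsGT hC']
    with r ⟨hr0, hr⟩ ⟨_, hrC⟩
  obtain ⟨n, hnr, hrn⟩ := exists_nat_pow_near_of_lt_one (y := (δ : ℝ)) (div_pos hr0 hC)
    ((div_le_one (by positivity)).2 hrC.le) hδ hδ1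
  have hn : n₀ ≤ n + 1 := by
    have hlt : (δ : ℝ) ^ (n + 1) < δ ^ n₀ :=
      hnr.trans ((div_lt_iff₀' (by positivity)).2 (hr.trans_le (min_le_right _ _)))
    exact ((pow_lt_pow_iff_right_of_lt_one₀ hδ' hδ1).1 hlt).le
  have hball : ball x (C * δ ^ (n + 1)) ⊆ ball x r :=
    ball_subset_ball (((lt_div_iff₀' (by positivity)).1 hnr).le)
  have hballfin : μ (ball x r) ≠ ∞ :=
    measure_ne_top_of_subset (ball_subset_ball (hr.le.trans (min_le_left _ _))) hfin.ne
  calc (δ / C : ℝ) ^ s * r ^ s = (r / C * δ) ^ s := by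
        rw [← Real.mul_rpow (by positivity) hr0.le]; congr 1; ring
    _ ≤ (δ ^ (n + 1) : ℝ) ^ s := by rw [pow_succ]; gcongr; exact hrn
    _ = (((δ : ℝ≥0∞) ^ (n + 1)) ^ s).toReal := by simp [← ENNReal.toReal_rpow]
    _ ≤ μ.real (ball x r) := ENNReal.toReal_mono hballfin ((hn₀ _ hn).trans (measure_mono hball))

variable {A : Set X} {t : ℝ} {δ R : ℝ≥0}

lemma HasDecayingCovers.ae_upperLocalDim_le_of_mem_closedBall [IsLocallyFiniteMeasure μ]
    (h : HasDecayingCovers μ A t δ (δ ^ (-(s * (1 - t))) / 2) R) (hδ : 0 < δ) (hδ1 : δ < 1)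
    (ht : 0 ≤ t) (ht1 : t ≤ 1) (hs : 0 ≤ s) {ρ : ℝ≥0} (hρ : 0 < ρ) (hρR : ρ ≤ R)
    (hfin : μ (ball x (5 * ρ)) ≠ ∞) :
    ∀ᵐ a ∂μ, a ∈ A ∩ closedBall x ρ → upperLocalDim μ a ≤ s := by
  let light (n : ℕ) : Set X :=
    {a ∈ A ∩ closedBall x ρ | μ (ball a (6 * ((δ ^ n : ℝ≥0) * ρ))) ≤ ((δ : ℝ≥0∞) ^ n) ^ s}
  have hlight (n : ℕ) : μ (light n) ≤ 2⁻¹ ^ n * μ (ball x (5 * ρ)) ^ t := by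
    have hu0 : (δ : ℝ≥0∞) ^ (s * (1 - t)) ≠ 0 := by simp [hδ.ne']
    have hutop : (δ : ℝ≥0∞) ^ (s * (1 - t)) ≠ ∞ := by simp [hδ.ne']
    calc μ (light n)
        ≤ (((δ : ℝ≥0∞) ^ n) ^ s) ^ (1 - t) *
            ((δ ^ (-(s * (1 - t))) / 2) ^ n * μ (ball x (5 * ρ)) ^ t) :=
          (h.pow hδ hδ1.le n).measure_light_le (pow_pos hδ n) ht ht1 hρ hρR _
      _ = ((δ : ℝ≥0∞) ^ (s * (1 - t))) ^ n *
            ((δ ^ (-(s * (1 - t))) / 2) ^ n * μ (ball x (5 * ρ)) ^ t) := by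
          rw [← ENNReal.rpow_mul, ← ENNReal.rpow_natCast (δ : ℝ≥0∞), ← ENNReal.rpow_mul,
            mul_comm (n : ℝ), ENNReal.rpow_mul, ENNReal.rpow_natCast]
      _ = 2⁻¹ ^ n * μ (ball x (5 * ρ)) ^ t := by
          rw [← mul_assoc, ← mul_pow, ENNReal.rpow_neg, div_eq_mul_inv, ← mul_assoc,
            ENNReal.mul_inv_cancel hu0 hutop, one_mul]
  have hsum : ∑' n, μ (light n) ≠ ∞ := by
    refine ne_top_of_le_ne_top ?_ (ENNReal.tsum_le_tsum hlight)
    rw [ENNReal.tsum_mul_right, ENNReal.tsum_geometric_two]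
    exact ENNReal.mul_ne_top (by simp) (ENNReal.rpow_ne_top_of_nonneg ht hfin)
  filter_upwards [ae_eventually_notMem hsum] with a ha haA
  refine upperLocalDim_le_of_eventually_pow_le hδ hδ1 (C := 6 * ρ) (by positivity) hs ?_
  filter_upwards [ha] with n hn
  have hlt := not_le.1 fun hle => hn ⟨haA, hle⟩
  refine hlt.le.trans_eq (congrArg (fun r => μ (ball a r)) ?_)
  push_cast
  ring

lemma HasDecayingCovers.ae_upperLocalDim_le [SecondCountableTopology X] [IsLocallyFiniteMeasure μ]
    (h : HasDecayingCovers μ A t δ (δ ^ (-(s * (1 - t))) / 2) R) (hδ : 0 < δ) (hδ1 : δ < 1)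
    (ht : 0 ≤ t) (ht1 : t ≤ 1) (hs : 0 ≤ s) (hR : 0 < R) :
    ∀ᵐ a ∂μ, a ∈ A → upperLocalDim μ a ≤ s := by
  refine measure_null_of_locally_null _ fun x _ => ?_
  obtain ⟨ε, hε, hfin⟩ := (μ.finiteAt_nhds x).exists_mem_basis nhds_basis_ball
  lift ε to ℝ≥0 using hε.le
  have hρ : 0 < min R (ε / 5) := lt_min hR (div_pos hε (by norm_num))
  have hρfin : μ (ball x (5 * (min R (ε / 5) : ℝ≥0))) ≠ ∞ := by
    refine measure_ne_top_of_subset (ball_subset_ball ?_) hfin.ne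
    have hmin : (min R (ε / 5) : ℝ≥0) ≤ (ε / 5 : ℝ) := min_le_right R (ε / 5)
    linarith
  have hae := h.ae_upperLocalDim_le_of_mem_closedBall hδ hδ1 ht ht1 hs hρ (min_le_left _ _) hρfin
  refine ⟨_, inter_mem_nhdsWithin _ (closedBall_mem_nhds x hρ), measure_mono_null ?_ hae⟩
  rintro a ⟨ha, haball⟩ himp
  exact ha fun haA => himp ⟨haA, haball⟩

end LocalDimension

section ConicalDensity

open scoped Topology

variable {d k : ℕ} {s t γ : ℝ}

/-- The least proportion of the mass of `ball x r` that a cone at `x` around a plane of codimension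
`k` keeps after removal of an almost half-space. -/
noncomputable def minConicalRatio (k : ℕ) (γ : ℝ) (μ : Measure (EuclideanSpace ℝ (Fin d)))
    (x : EuclideanSpace ℝ (Fin d)) (r : ℝ) : ℝ≥0∞ :=
  ⨅ (θ : EuclideanSpace ℝ (Fin d)) (_ : ‖θ‖ = 1)
    (V : Submodule ℝ (EuclideanSpace ℝ (Fin d))) (_ : Module.finrank ℝ V = d - k),
    μ (coneX x r V γ \ halfSpaceH x θ γ) / μ (ball x r)

lemma exists_measure_coneX_diff_halfSpaceH_le {μ : Measure (EuclideanSpace ℝ (Fin d))}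
    {x : EuclideanSpace ℝ (Fin d)} {r : ℝ} {c : ℝ≥0∞} (hc : c ≠ ∞)
    (h : minConicalRatio k γ μ x r < c) :
    ∃ V : Submodule ℝ (EuclideanSpace ℝ (Fin d)), Module.finrank ℝ V = d - k ∧
      ∃ θ : EuclideanSpace ℝ (Fin d), ‖θ‖ = 1 ∧
        μ (coneX x r V γ \ halfSpaceH x θ γ) ≤ c * μ (ball x r) := by
  have hc0 : c ≠ 0 := (bot_le.trans_lt h).ne'
  simp only [minConicalRatio, iInf_lt_iff] at h
  obtain ⟨θ, hθ, V, hV, hlt⟩ := h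
  exact ⟨V, hV, θ, hθ, (ENNReal.div_le_iff_le_mul (.inr hc) (.inr hc0)).1 hlt.le⟩

lemma exists_forall_packingNumber_heavyPoints_le (hkd : k ≤ d) (hγ : 0 < γ) :
    ∃ L C : ℝ≥0, L ≠ 0 ∧ ∀ (μ : Measure (EuclideanSpace ℝ (Fin d)))
      (A : Set (EuclideanSpace ℝ (Fin d))) (c : ℝ≥0∞) (δ R : ℝ≥0), c ≠ ∞ → 0 < δ → δ ≤ 2 / 5 →
      (∀ y ∈ A, ∀ r ∈ Ioc (0 : ℝ) (4 * R), minConicalRatio k γ μ y r < c) →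
      ∀ x ρ, 0 < ρ → ρ ≤ R →
        packingNumber (L * (δ * ρ)) (heavyPoints μ A c δ x ρ) ≤ ⌊C / δ ^ k⌋₊ := by
  obtain ⟨L, C, hL, hLC⟩ := exists_forall_exists_ball_subset_coneX_diff_halfSpaceH hkd hγ
  refine ⟨L, C, hL, fun μ A c δ R hc hδ hδ1 hA x ρ hρ hρR => ?_⟩
  refine packingNumber_le_of_forall_finset_card_le fun P hP hsep => Nat.le_floor ?_
  rw [le_div_iff₀' (pow_pos hδ k)]
  by_contra! hcard
  choose! V hV θ hθ hVθ using fun y (hy : y ∈ P) => exists_measure_coneX_diff_halfSpaceH_le hc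
    (hA y (hP hy).1.1 (4 * ρ) ⟨by positivity, by gcongr⟩)
  obtain ⟨y₀, hy₀, hcone⟩ :=
    hLC δ ρ hδ hδ1 hρ x P (fun y hy => (hP hy).1.2) hsep V hV hcard
  obtain ⟨y, hy, hball⟩ := hcone (θ y₀) (hθ y₀ hy₀)
  have hy₀x : dist y₀ x ≤ ρ := (hP hy₀).1.2
  refine (hP hy).2.not_ge ?_
  calc μ (ball y (5 * (δ * ρ)))
      ≤ μ (coneX y₀ (4 * ρ) (V y₀) γ \ halfSpaceH y₀ (θ y₀) γ) := measure_mono hball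
    _ ≤ c * μ (ball y₀ (4 * ρ)) := hVθ y₀ hy₀
    _ ≤ c * μ (ball x (5 * ρ)) := by
        gcongr
        exact ball_subset_ball' (by linarith)

lemma exists_forall_coveringNumber_heavyPoints_le (hkd : k ≤ d) (hγ : 0 < γ) :
    ∃ C : ℝ≥0, ∀ (μ : Measure (EuclideanSpace ℝ (Fin d)))
      (A : Set (EuclideanSpace ℝ (Fin d))) (c : ℝ≥0∞) (δ R : ℝ≥0), c ≠ ∞ → 0 < δ → δ ≤ 2 / 5 →
      (∀ y ∈ A, ∀ r ∈ Ioc (0 : ℝ) (4 * R), minConicalRatio k γ μ y r < c) →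
      ∀ x ρ, 0 < ρ → ρ ≤ R →
        coveringNumber (δ * ρ) (heavyPoints μ A c δ x ρ) ≤ ⌊C / δ ^ k⌋₊ := by
  obtain ⟨L, C, hL, hC⟩ := exists_forall_packingNumber_heavyPoints_le hkd hγ
  obtain ⟨D, hD⟩ :=
    exists_forall_coveringNumber_mul_le (EuclideanSpace ℝ (Fin d)) (inv_ne_zero hL)
  refine ⟨C * D, fun μ A c δ R hc hδ hδ1 hA x ρ hρ hρR => ?_⟩
  have hfloor : ⌊C / δ ^ k⌋₊ * D ≤ ⌊C * D / δ ^ k⌋₊ := by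
    rw [mul_div_right_comm]
    refine Nat.le_floor ?_
    push_cast
    gcongr
    exact Nat.floor_le (by positivity)
  have hrefine : ∀ y ∈ heavyPoints μ A c δ x ρ, coveringNumber (δ * ρ)
      (heavyPoints μ A c δ x ρ ∩ closedBall y (L * (δ * ρ) : ℝ≥0)) ≤ D := fun y _ => by
    simpa only [inv_mul_cancel_left₀ hL] using hD y (L * (δ * ρ)) _ inter_subset_right
  exact (coveringNumber_le_mul ((coveringNumber_le_packingNumber _ _).trans
    (hC μ A c δ R hc hδ hδ1 hA x ρ hρ hρR)) hrefine).trans (by exact_mod_cast hfloor)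

lemma exists_pos_le_mul_rpow_le {p : ℝ} (hp : 0 < p) (C : ℝ≥0) {a b : ℝ≥0} (ha : 0 < a)
    (hb : 0 < b) : ∃ x : ℝ≥0, 0 < x ∧ x ≤ a ∧ C * x ^ p ≤ b := by
  have hlim : Tendsto (fun x : ℝ≥0 => C * x ^ p) (𝓝[>] 0) (𝓝 0) := by
    have h := (NNReal.continuousAt_rpow_const (x := 0) (.inr hp.le)).tendsto.const_mul C
    rw [NNReal.zero_rpow hp.ne', mul_zero] at h
    exact h.mono_left nhdsWithin_le_nhds
  obtain ⟨x, hx, hx0, hxa⟩ :=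
    ((hlim.eventually_le_const hb).and (Ioc_mem_nhdsGT ha)).exists
  exact ⟨x, hx0, hxa, hx⟩

lemma exists_forall_hasDecayingCovers (hkd : k ≤ d) (hγ : 0 < γ) (hs : k < s) (ht : 0 < t) :
    ∃ δ c : ℝ≥0, 0 < δ ∧ δ < 1 ∧ 0 < c ∧ ∀ (μ : Measure (EuclideanSpace ℝ (Fin d)))
      (A : Set (EuclideanSpace ℝ (Fin d))) (R : ℝ≥0),
      (∀ y ∈ A, ∀ r ∈ Ioc (0 : ℝ) (4 * R), minConicalRatio k γ μ y r < c) →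
        HasDecayingCovers μ A t δ (δ ^ (-s) / 2) R := by
  obtain ⟨C, hC⟩ := exists_forall_coveringNumber_heavyPoints_le hkd hγ
  obtain ⟨δ, hδ, hδ1, hCδ⟩ := exists_pos_le_mul_rpow_le (sub_pos.2 hs) C
    (a := 2 / 5) (b := 1 / 4) (by positivity) (by positivity)
  obtain ⟨D, hD⟩ := exists_forall_coveringNumber_mul_le (EuclideanSpace ℝ (Fin d)) hδ.ne'
  obtain ⟨c, hc, -, hDc⟩ := exists_pos_le_mul_rpow_le ht D
    (b := δ ^ (-s) / 4) one_pos (div_pos (NNReal.rpow_pos hδ) (by positivity))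
  refine ⟨δ, c, hδ, hδ1.trans_lt (by norm_num), hc, fun μ A R hA => ?_⟩
  have hN : C / δ ^ k ≤ δ ^ (-s) / 4 := by
    calc C / δ ^ k = C * δ ^ (s - k) * δ ^ (-s) := by
          rw [mul_assoc, ← NNReal.rpow_add hδ.ne', sub_add_eq_add_sub, add_neg_cancel, zero_sub,
            NNReal.rpow_neg, NNReal.rpow_natCast, div_eq_mul_inv]
      _ ≤ 1 / 4 * δ ^ (-s) := by gcongr
      _ = δ ^ (-s) / 4 := one_div_mul_eq_div _ _
  have hq : (⌊C / δ ^ k⌋₊ + D * c ^ t : ℝ≥0) ≤ δ ^ (-s) / 2 := by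
    calc (⌊C / δ ^ k⌋₊ + D * c ^ t : ℝ≥0) ≤ δ ^ (-s) / 4 + δ ^ (-s) / 4 :=
          add_le_add ((Nat.floor_le (by positivity)).trans hN) hDc
      _ = δ ^ (-s) / 2 := by ring
  refine hasDecayingCovers_of_coveringNumber_heavyPoints_le ht.le hδ1 ?_
    (hC μ A c δ R ENNReal.coe_ne_top hδ hδ1 hA) hD
  rw [← ENNReal.coe_rpow_of_nonneg _ ht.le, ← ENNReal.coe_rpow_of_ne_zero hδ.ne']
  simpa using ENNReal.coe_le_coe.2 hq

lemma exists_forall_ae_frequently_le_minConicalRatio (hkd : k ≤ d) (hγ : 0 < γ) (hs : k < s) :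
    ∃ c : ℝ≥0, 0 < c ∧ ∀ (μ : Measure (EuclideanSpace ℝ (Fin d))) [IsLocallyFiniteMeasure μ],
      ∀ᵐ x ∂μ, s < upperLocalDim μ x → ∃ᶠ r in 𝓝[>] (0 : ℝ), c ≤ minConicalRatio k γ μ x r := by
  have hk : (0 : ℝ) ≤ k := k.cast_nonneg
  have hs0 : 0 < s := hk.trans_lt hs
  let t : ℝ := (s - k) / (2 * s)
  have ht : 0 < t := div_pos (sub_pos.2 hs) (by positivity)
  have ht1 : t ≤ 1 := div_le_one_of_le₀ (by linarith) (by positivity)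
  have hst : k < s * (1 - t) := by
    have : s * (1 - t) = (s + k) / 2 := by simp only [t]; field_simp; ring
    linarith
  obtain ⟨δ, c, hδ, hδ1, hc, hcovers⟩ := exists_forall_hasDecayingCovers hkd hγ hst ht
  refine ⟨c, hc, fun μ _ => ?_⟩
  let A (n : ℕ) : Set (EuclideanSpace ℝ (Fin d)) :=
    {y | ∀ r ∈ Ioc (0 : ℝ) (4 * (1 / (n + 1) : ℝ≥0)), minConicalRatio k γ μ y r < c}
  have hA : ∀ᵐ x ∂μ, ∀ n, x ∈ A n → upperLocalDim μ x ≤ s := ae_all_iff.2 fun n =>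
    (hcovers μ (A n) _ fun _ hy => hy).ae_upperLocalDim_le hδ hδ1 ht.le ht1 hs0.le (by positivity)
  filter_upwards [hA] with x hx hsx
  by_contra hfreq
  simp only [not_frequently, not_le] at hfreq
  obtain ⟨ε, hε, hsub⟩ := mem_nhdsGT_iff_exists_Ioc_subset.1 hfreq
  obtain ⟨n, hn⟩ := exists_nat_one_div_lt (div_pos (mem_Ioi.1 hε) four_pos)
  refine (hx n fun r hr => hsub ⟨hr.1, hr.2.trans ?_⟩).not_gt hsx
  push_cast
  linarith

theorem stmt17_general (hkd : k ≤ d) (hγ : 0 < γ) (hs : k < s) :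
    ∃ c : ℝ≥0∞, 0 < c ∧ ∀ (μ : Measure (EuclideanSpace ℝ (Fin d))) [IsLocallyFiniteMeasure μ],
      s < lowerPackingDim μ → ∀ᵐ x ∂μ, c < limsup (minConicalRatio k γ μ x) (𝓝[>] 0) := by
  obtain ⟨c, hc, h⟩ := exists_forall_ae_frequently_le_minConicalRatio hkd hγ hs
  refine ⟨(c / 2 : ℝ≥0), by positivity, fun μ _ hdim => ?_⟩
  filter_upwards [h μ, ae_lt_of_lt_essInf hdim] with x hx hsx
  calc ((c / 2 : ℝ≥0) : ℝ≥0∞) < c := ENNReal.coe_lt_coe.2 (half_lt_self hc)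
    _ ≤ limsup (minConicalRatio k γ μ x) (𝓝[>] 0) := le_limsup_of_frequently_le (hx hsx)

end ConicalDensity

/-- (Conical densities.) Let `1 ≤ k < d` and let `μ` be a nonzero
locally finite Borel measure on `ℝ^d` with lower packing dimension strictly larger than
`k`. Then for every `γ ∈ (0,1]` there is `c > 0` such that for `μ`-a.e. `x`,
`limsup_{r→0} inf_{θ ∈ S^{d−1}, V ∈ G(d,d−k)} μ(X(x,r,V,γ) \ H(x,θ,γ)) / μ(B(x,r)) > c`. -/
theorem stmt17 (d k : ℕ) (hk : 1 ≤ k) (hkd : k < d)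
    (μ : Measure (EuclideanSpace ℝ (Fin d))) [IsLocallyFiniteMeasure μ] (hμ : μ ≠ 0)
    (hdim : (k : EReal) < lowerPackingDim μ) :
    ∀ γ : ℝ, γ ∈ Set.Ioc (0 : ℝ) 1 → ∃ c : ℝ≥0∞, 0 < c ∧
      ∀ᵐ x ∂μ, c < Filter.limsup (fun r : ℝ =>
        ⨅ (θ : EuclideanSpace ℝ (Fin d)) (_ : ‖θ‖ = 1)
          (V : Submodule ℝ (EuclideanSpace ℝ (Fin d))) (_ : Module.finrank ℝ V = d - k),
          μ (coneX x r V γ \ halfSpaceH x θ γ) / μ (Metric.ball x r))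
        (nhdsWithin 0 (Set.Ioi 0)) := by
  intro γ hγ
  obtain ⟨s, hs, hsdim⟩ := EReal.lt_iff_exists_real_btwn.1 hdim
  obtain ⟨c, hc, h⟩ := stmt17_general hkd.le hγ.1 (EReal.coe_lt_coe_iff.1 hs)
  exact ⟨c, hc, h μ hsdim⟩
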